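/- Let u ∈ 𝒢(Ω) with representative (u_ε)_ε. Then u is sublinear if and only if for each compact K ⊂⊂ Ω there exists a real number a > 0 such that u ∈ 𝒢^{L,a}(K). -/

import Mathlib

open Filter MeasureTheory Metric Set
open scoped Topology BigOperators

noncomputable section

/-- Euclidean space ℝ^d. -/
abbrev Euc (d : ℕ) : Type := EuclideanSpace ℝ (Fin d)

variable {d : ℕ}

/-- "P ε holds for small ε". -/
def SmallE (P : ℝ → Prop) : Prop :=
  ∃ ε₀ : ℝ, 0 < ε₀ ∧ ∀ ε : ℝ, 0 < ε → ε < ε₀ → P ε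

/-- Directional derivative ∂ₑ u in the direction e. -/
def pderivDir {F : Type} [NormedAddCommGroup F] [NormedSpace ℝ F]
    (e : Euc d) (u : Euc d → F) : Euc d → F :=
  fun x => fderiv ℝ u x e

/-- Multi-index partial derivative ∂^α u. -/
def partialDeriv {F : Type} [NormedAddCommGroup F] [NormedSpace ℝ F]
    (α : Fin d → ℕ) (u : Euc d → F) : Euc d → F :=
  (List.finRange d).foldr
    (fun i v => (pderivDir (EuclideanSpace.single i (1 : ℝ)))^[α i] v) u

/-- p_{α,K}(u) = sup_{x ∈ K} |∂^α u(x)|. -/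
def pSemi {F : Type} [NormedAddCommGroup F] [NormedSpace ℝ F]
    (α : Fin d → ℕ) (K : Set (Euc d)) (u : Euc d → F) : ℝ :=
  sSup ((fun x => ‖partialDeriv α u x‖) '' K)

/-- p_{k,K}(u) = max_{|α| = k} p_{α,K}(u). -/
def pSemiK {F : Type} [NormedAddCommGroup F] [NormedSpace ℝ F]
    (k : ℕ) (K : Set (Euc d)) (u : Euc d → F) : ℝ :=
  sSup {y : ℝ | ∃ α : Fin d → ℕ, (∑ i, α i) = k ∧ y = pSemi α K u}

/-- Moderate nets of smooth functions on Ω. -/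
def Moderate (Ω : Set (Euc d)) (u : ℝ → Euc d → ℂ) : Prop :=
  (∀ ε ∈ Set.Ioo (0:ℝ) 1, ContDiffOn ℝ (⊤ : ℕ∞) (u ε) Ω) ∧
  ∀ K : Set (Euc d), IsCompact K → K ⊆ Ω → ∀ α : Fin d → ℕ,
    ∃ N : ℕ, SmallE fun ε => pSemi α K (u ε) ≤ ε ^ (-(N : ℝ))

/-- Negligible nets of smooth functions on Ω. -/
def Negligible (Ω : Set (Euc d)) (u : ℝ → Euc d → ℂ) : Prop :=
  (∀ ε ∈ Set.Ioo (0:ℝ) 1, ContDiffOn ℝ (⊤ : ℕ∞) (u ε) Ω) ∧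
  ∀ K : Set (Euc d), IsCompact K → K ⊆ Ω → ∀ α : Fin d → ℕ, ∀ m : ℕ,
    SmallE fun ε => pSemi α K (u ε) ≤ ε ^ (m : ℝ)

/-- The algebra of moderate nets. -/
abbrev ModNet (Ω : Set (Euc d)) : Type := {u : ℝ → Euc d → ℂ // Moderate Ω u}

/-- Two moderate nets are identified when their difference is negligible. -/
def nulRel (Ω : Set (Euc d)) (u v : ModNet Ω) : Prop :=
  Negligible Ω (fun ε x => u.1 ε x - v.1 ε x)

/-- The special Colombeau algebra 𝒢(Ω). -/
abbrev Colombeau (Ω : Set (Euc d)) : Type := Quot (nulRel Ω)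

/-- The valuation of a net of complex numbers, with values in EReal
(⊤ corresponding to nets with arbitrarily good decay). -/
def valuation (z : ℝ → ℂ) : EReal :=
  sSup ((fun b : ℝ => (b : EReal)) '' {b : ℝ | SmallE fun ε => ‖z ε‖ ≤ ε ^ b})

/-- The sharp norm e^{-v(z)} of a net of complex numbers. -/
def sharpNorm (z : ℝ → ℂ) : ℝ :=
  if valuation z = ⊤ then 0 else Real.exp (-(valuation z).toReal)

/-- P_{k,K}(u) = ‖(p_{k,K}(u_ε))_ε‖ (computed via a representative;
independent of the representative). -/
def PNorm (Ω : Set (Euc d)) (k : ℕ) (K : Set (Euc d)) (u : Colombeau Ω) : ℝ :=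
  sharpNorm fun ε => ((pSemiK k K ((Quot.out u).1 ε) : ℝ) : ℂ)

/-- P_{α,K}(u) = ‖(p_{α,K}(u_ε))_ε‖ for a multi-index α. -/
def PNormA (Ω : Set (Euc d)) (α : Fin d → ℕ) (K : Set (Euc d)) (u : Colombeau Ω) : ℝ :=
  sharpNorm fun ε => ((pSemi α K ((Quot.out u).1 ε) : ℝ) : ℂ)

/-- The ultra-pseudo-seminorm P_{α,K} applied to the difference u - v. -/
def PNormDiff (Ω : Set (Euc d)) (α : Fin d → ℕ) (K : Set (Euc d))
    (u v : Colombeau Ω) : ℝ :=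
  sharpNorm fun ε =>
    ((pSemi α K (fun x => (Quot.out u).1 ε x - (Quot.out v).1 ε x) : ℝ) : ℂ)

/-- The sharp topology on 𝒢(Ω): generated by the balls of the
ultra-pseudo-seminorms P_{α,K}. -/
def sharpTopology (Ω : Set (Euc d)) : TopologicalSpace (Colombeau Ω) :=
  TopologicalSpace.generateFrom
    {S | ∃ (u : Colombeau Ω) (α : Fin d → ℕ) (K : Set (Euc d)) (r : ℝ),
      IsCompact K ∧ K ⊆ Ω ∧ 0 < r ∧ S = {v | PNormDiff Ω α K u v < r}}

/-- K satisfies the segment condition: there is r > 0 such that every x ∈ K lies on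
d line segments of length r, in linearly independent (unit) directions, contained in K. -/
def SegmentCond (K : Set (Euc d)) : Prop :=
  ∃ r : ℝ, 0 < r ∧ ∀ x ∈ K, ∃ e : Fin d → Euc d, LinearIndependent ℝ e ∧
    ∀ i : Fin d, ‖e i‖ = 1 ∧ ∃ a : ℝ, a ≤ 0 ∧ 0 ≤ a + r ∧
      ∀ t : ℝ, a ≤ t → t ≤ a + r → x + t • e i ∈ K

/-- 𝒢^∞(K). -/
def GInfK (Ω : Set (Euc d)) (K : Set (Euc d)) : Set (Colombeau Ω) :=
  {u | ∃ v : ModNet Ω, Quot.mk (nulRel Ω) v = u ∧ ∃ N : ℕ,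
    ∀ α : Fin d → ℕ, SmallE fun ε => pSemi α K (v.1 ε) ≤ ε ^ (-(N : ℝ))}

/-- 𝒢^{L,a}(K), the generalized functions of sublinear growth with slope
smaller than a on K. -/
def GLaK (Ω : Set (Euc d)) (a : ℝ) (K : Set (Euc d)) : Set (Colombeau Ω) :=
  {u | ∃ v : ModNet Ω, Quot.mk (nulRel Ω) v = u ∧ ∃ a' : ℝ, a' < a ∧ ∃ b : ℝ,
    ∀ α : Fin d → ℕ,
      SmallE fun ε => pSemi α K (v.1 ε) ≤ ε ^ (-(a' * (∑ i, (α i : ℝ))) - b)}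

/-- 𝒢^{L,0}(K) = ⋂_{a>0} 𝒢^{L,a}(K). -/
def GL0K (Ω : Set (Euc d)) (K : Set (Euc d)) : Set (Colombeau Ω) :=
  {u | ∀ a : ℝ, 0 < a → u ∈ GLaK Ω a K}

/-- 𝒢^∞(Ω) = ⋂_{K⊂⊂Ω} 𝒢^∞(K). -/
def GInfOmega (Ω : Set (Euc d)) : Set (Colombeau Ω) :=
  {u | ∀ K : Set (Euc d), IsCompact K → K ⊆ Ω → u ∈ GInfK Ω K}

/-- 𝒢^{L,a}(Ω) = ⋂_{K⊂⊂Ω} 𝒢^{L,a}(K). -/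
def GLaOmega (Ω : Set (Euc d)) (a : ℝ) : Set (Colombeau Ω) :=
  {u | ∀ K : Set (Euc d), IsCompact K → K ⊆ Ω → u ∈ GLaK Ω a K}

/-- 𝒢^{L,0}(Ω) = ⋂_{K⊂⊂Ω} 𝒢^{L,0}(K). -/
def GL0Omega (Ω : Set (Euc d)) : Set (Colombeau Ω) :=
  {u | ∀ K : Set (Euc d), IsCompact K → K ⊆ Ω → u ∈ GL0K Ω K}

/-- u ∈ 𝒢(Ω) is sublinear. -/
def Sublinear (Ω : Set (Euc d)) (u : Colombeau Ω) : Prop :=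
  ∃ v : ModNet Ω, Quot.mk (nulRel Ω) v = u ∧
    ∀ K : Set (Euc d), IsCompact K → K ⊆ Ω →
      ∀ x : ℝ → Euc d, (∀ ε ∈ Set.Ioo (0:ℝ) 1, x ε ∈ K) →
        ∃ k : ℝ, ∃ p : ℕ → ℝ,
          Filter.Tendsto (fun n : ℕ => p n + k * n) atTop atTop ∧
          ∀ α : Fin d → ℕ,
            SmallE fun ε => ‖partialDeriv α (v.1 ε) (x ε)‖ ≤ ε ^ (p (∑ i, α i))

/-- The scaled mollifier ψ_δ(x) = δ^{-d} ψ(x/δ). -/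
def mollify (ψ : Euc d → ℝ) (δ : ℝ) : Euc d → ℝ :=
  fun x => ((δ : ℝ) ^ d)⁻¹ * ψ (δ⁻¹ • x)

/-- Convolution u ⋆ ψ (with a real-valued kernel ψ). -/
def conv (u : Euc d → ℂ) (ψ : Euc d → ℝ) : Euc d → ℂ :=
  fun x => ∫ t : Euc d, u (x - t) * ((ψ t : ℝ) : ℂ)

/-- 𝒢_c(Ω): compactly supported generalized functions (restriction to Ω∖K
is 0 in 𝒢(Ω∖K), i.e. some representative is negligible on Ω∖K). -/
def GCompact (Ω : Set (Euc d)) : Set (Colombeau Ω) :=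
  {u | ∃ v : ModNet Ω, Quot.mk (nulRel Ω) v = u ∧
    ∃ K : Set (Euc d), IsCompact K ∧ K ⊆ Ω ∧ Negligible (Ω \ K) v.1}

/-! If no single affine exponent works on `K`, then for every `n` there is a multi-index `α n` such
that the bound `ε^{-n|α n|-n}` fails at points of `K` for arbitrarily small `ε`. Distributing the
small `ε` among the countably many `n`, each `n` keeping arbitrarily small ones, glues these points
into a single net in `K` that violates all the bounds at once. Along that net sublinearity fails:
a sequence `p` with `p n + k * n → ∞` is bounded below by `C - k * n` for some `C`, so pointwise
sublinearity already amounts to an affine exponent. The converse only needs that negligible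
perturbations preserve growth bounds up to an additive constant in the exponent. -/

section SmallParameter

lemma smallE_iff_eventually {P : ℝ → Prop} : SmallE P ↔ ∀ᶠ ε in 𝓝[>] (0 : ℝ), P ε := by
  simp only [(nhdsGT_basis (0 : ℝ)).eventually_iff, SmallE, mem_Ioo, and_imp]

lemma comap_natFloor_inv_atTop : comap (fun ε : ℝ => ⌊ε⁻¹⌋₊) atTop = 𝓝[>] 0 := by
  refine le_antisymm ((nhdsGT_basis 0).ge_iff.2 fun δ hδ => ?_)
    (tendsto_nat_floor_atTop.comp tendsto_inv_nhdsGT_zero).le_comap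
  refine ⟨Ioi ⌊δ⁻¹⌋₊, Ioi_mem_atTop _, fun ε hε => ?_⟩
  have hinv : δ⁻¹ < ε⁻¹ := lt_of_not_ge fun h => (Nat.floor_mono h).not_gt hε
  have hε₀ : 0 < ε := inv_pos.1 ((inv_pos.2 hδ).trans hinv)
  exact ⟨hε₀, (inv_lt_inv₀ hδ hε₀).1 hinv⟩

lemma rpow_add_rpow_le_rpow {ε r s t : ℝ} (hε : 0 < ε) (hε' : ε ≤ 1 / 2)
    (hs : r + 1 ≤ s) (ht : r + 1 ≤ t) : ε ^ s + ε ^ t ≤ ε ^ r := by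
  have le_half : ∀ q, r + 1 ≤ q → ε ^ q ≤ ε ^ r * (1 / 2) := fun q hq =>
    calc ε ^ q ≤ ε ^ (r + 1) := Real.rpow_le_rpow_of_exponent_ge hε (by linarith) hq
      _ = ε ^ r * ε := Real.rpow_add_one hε.ne' r
      _ ≤ ε ^ r * (1 / 2) := by gcongr
  linarith [le_half s hs, le_half t ht]

lemma exists_seq_exponent_iff_exists_affine_exponent {ι : Type*} (ω : ι → ℕ) (f : ι → ℝ → ℝ) :
    (∃ k : ℝ, ∃ p : ℕ → ℝ, Tendsto (fun n : ℕ => p n + k * n) atTop atTop ∧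
      ∀ i, SmallE fun ε => f i ε ≤ ε ^ p (ω i)) ↔
    ∃ a b : ℝ, ∀ i, ∀ᶠ ε in 𝓝[>] (0 : ℝ), f i ε ≤ ε ^ (-(a * ω i) - b) := by
  simp only [smallE_iff_eventually]
  constructor
  · rintro ⟨k, p, hp, hf⟩
    obtain ⟨C, hC⟩ := bddBelow_range_of_tendsto_atTop_atTop hp
    refine ⟨k, -C, fun i => ?_⟩
    filter_upwards [hf i, Ioo_mem_nhdsGT one_pos] with ε hfε hε
    have hpC : C ≤ p (ω i) + k * ω i := hC (mem_range_self _)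
    exact hfε.trans (Real.rpow_le_rpow_of_exponent_ge hε.1 hε.2.le (by linarith))
  · rintro ⟨a, b, hf⟩
    refine ⟨a + 1, fun n => -(a * n) - b, ?_, hf⟩
    have haffine : ∀ n : ℕ, -(a * n) - b + (a + 1) * n = n + -b := fun n => by ring
    simp only [haffine]
    exact tendsto_atTop_add_const_right _ _ tendsto_natCast_atTop_atTop

end SmallParameter

section Uniformity

variable {E X ι : Type*}

lemma exists_index_frequently {φ : E → ℕ} {P : ℕ → E → Prop}
    (h : ∀ n, ∃ᶠ e in comap φ atTop, P n e) :
    ∃ N : E → ℕ, ∀ n, ∃ᶠ e in comap φ atTop, N e = n ∧ P n e := by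
  simp only [frequently_comap] at h ⊢
  -- `ψ j` is a fibre of `φ` reserved for the index `(Nat.unpair j).1`, so that every index
  -- receives infinitely many fibres.
  obtain ⟨ψ, hψ, hP⟩ := extraction_forall_of_frequently fun j => h (Nat.unpair j).1
  refine ⟨fun e => (Nat.unpair (Function.invFun ψ (φ e))).1, fun n => ?_⟩
  refine frequently_atTop.2 fun M => ⟨ψ (Nat.pair n M), ?_, ?_⟩
  · exact (Nat.right_le_pair n M).trans hψ.le_apply
  · obtain ⟨e, he, hPe⟩ := hP (Nat.pair n M)
    rw [Nat.unpair_pair] at hPe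
    refine ⟨e, he, ?_, hPe⟩
    simp only [he, Function.leftInverse_invFun hψ.injective _, Nat.unpair_pair]

lemma exists_net_forall_frequently {φ : E → ℕ} {K : Set X} {P : ℕ → E → X → Prop}
    (h : ∀ n, ∃ᶠ e in comap φ atTop, ∃ x ∈ K, P n e x) :
    ∃ x : E → X, (∀ e, x e ∈ K) ∧ ∀ n, ∃ᶠ e in comap φ atTop, P n e (x e) := by
  obtain ⟨-, x₀, hx₀, -⟩ := (h 0).exists
  obtain ⟨N, hN⟩ := exists_index_frequently h
  have hchoice : ∀ e, ∃ x ∈ K, (∃ y ∈ K, P (N e) e y) → P (N e) e x := fun e => by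
    by_cases he : ∃ y ∈ K, P (N e) e y
    · obtain ⟨y, hy, hPy⟩ := he
      exact ⟨y, hy, fun _ => hPy⟩
    · exact ⟨x₀, hx₀, fun hy => (he hy).elim⟩
  choose x hxK hx using hchoice
  refine ⟨x, hxK, fun n => (hN n).mono ?_⟩
  rintro e ⟨rfl, he⟩
  exact hx e he

lemma exists_forall_eventually_forall_mem_of_net {φ : E → ℕ} {K : Set X}
    {Q : ℕ → ι → E → X → Prop}
    (h : ∀ x : E → X, (∀ e, x e ∈ K) → ∃ n, ∀ i, ∀ᶠ e in comap φ atTop, Q n i e (x e)) :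
    ∃ n, ∀ i, ∀ᶠ e in comap φ atTop, ∀ x ∈ K, Q n i e x := by
  by_contra! hfail
  choose i hi using hfail
  obtain ⟨x, hxK, hx⟩ := exists_net_forall_frequently hi
  obtain ⟨n, hn⟩ := h x hxK
  obtain ⟨e, hnot, hQe⟩ := ((hx n).and_eventually (hn (i n))).exists
  exact hnot hQe

end Uniformity

section PartialDerivatives

variable {F : Type} [NormedAddCommGroup F] [NormedSpace ℝ F] {Ω K : Set (Euc d)}
  {f g : Euc d → F}

lemma partialDeriv_eq_foldr (α : Fin d → ℕ) (f : Euc d → F) :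
    partialDeriv α f = ((List.finRange d).flatMap fun i =>
      List.replicate (α i) (EuclideanSpace.single i (1 : ℝ))).foldr pderivDir f := by
  have foldr_replicate : ∀ (n : ℕ) (e : Euc d) (h : Euc d → F),
      (List.replicate n e).foldr pderivDir h = (pderivDir e)^[n] h := fun n e h => by
    induction n with
    | zero => rfl
    | succ n ih => rw [List.replicate_succ, List.foldr_cons, ih, Function.iterate_succ_apply']
  simp only [partialDeriv, List.foldr_flatMap, foldr_replicate]

lemma contDiffOn_pderivDir (hΩ : IsOpen Ω) (hf : ContDiffOn ℝ (⊤ : ℕ∞) f Ω) (e : Euc d) :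
    ContDiffOn ℝ (⊤ : ℕ∞) (pderivDir e f) Ω :=
  (hf.fderiv_of_isOpen hΩ (by simp)).clm_apply contDiffOn_const

lemma contDiffOn_foldr_pderivDir (hΩ : IsOpen Ω) (hf : ContDiffOn ℝ (⊤ : ℕ∞) f Ω)
    (l : List (Euc d)) : ContDiffOn ℝ (⊤ : ℕ∞) (l.foldr pderivDir f) Ω := by
  induction l with
  | nil => exact hf
  | cons e l ih => exact contDiffOn_pderivDir hΩ ih e

lemma contDiffOn_partialDeriv (hΩ : IsOpen Ω) (hf : ContDiffOn ℝ (⊤ : ℕ∞) f Ω)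
    (α : Fin d → ℕ) : ContDiffOn ℝ (⊤ : ℕ∞) (partialDeriv α f) Ω := by
  rw [partialDeriv_eq_foldr]
  exact contDiffOn_foldr_pderivDir hΩ hf _

lemma eqOn_pderivDir (hΩ : IsOpen Ω) (h : EqOn f g Ω) (e : Euc d) :
    EqOn (pderivDir e f) (pderivDir e g) Ω := fun x hx => by
  rw [pderivDir, pderivDir, (h.eventuallyEq_of_mem (hΩ.mem_nhds hx)).fderiv_eq]

lemma eqOn_pderivDir_sub (hΩ : IsOpen Ω) (hf : DifferentiableOn ℝ f Ω)
    (hg : DifferentiableOn ℝ g Ω) (e : Euc d) :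
    EqOn (pderivDir e (f - g)) (pderivDir e f - pderivDir e g) Ω := fun x hx => by
  have hx' := hΩ.mem_nhds hx
  simp only [pderivDir, Pi.sub_apply,
    fderiv_sub (hf.differentiableAt hx') (hg.differentiableAt hx'), sub_apply]

lemma eqOn_foldr_pderivDir_sub (hΩ : IsOpen Ω) (hf : ContDiffOn ℝ (⊤ : ℕ∞) f Ω)
    (hg : ContDiffOn ℝ (⊤ : ℕ∞) g Ω) (l : List (Euc d)) :
    EqOn (l.foldr pderivDir (f - g)) (l.foldr pderivDir f - l.foldr pderivDir g) Ω := by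
  induction l with
  | nil => exact eqOn_refl _ _
  | cons e l ih =>
    have differentiableOn_foldr : ∀ {h : Euc d → F}, ContDiffOn ℝ (⊤ : ℕ∞) h Ω →
        DifferentiableOn ℝ (l.foldr pderivDir h) Ω := fun hh =>
      (contDiffOn_foldr_pderivDir hΩ hh l).differentiableOn (by simp)
    exact (eqOn_pderivDir hΩ ih e).trans
      (eqOn_pderivDir_sub hΩ (differentiableOn_foldr hf) (differentiableOn_foldr hg) e)

lemma eqOn_partialDeriv_sub (hΩ : IsOpen Ω) (hf : ContDiffOn ℝ (⊤ : ℕ∞) f Ω)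
    (hg : ContDiffOn ℝ (⊤ : ℕ∞) g Ω) (α : Fin d → ℕ) :
    EqOn (partialDeriv α (f - g)) (partialDeriv α f - partialDeriv α g) Ω := by
  simp only [partialDeriv_eq_foldr]
  exact eqOn_foldr_pderivDir_sub hΩ hf hg _

lemma pSemi_le_iff (hΩ : IsOpen Ω) (hK : IsCompact K) (hKΩ : K ⊆ Ω)
    (hf : ContDiffOn ℝ (⊤ : ℕ∞) f Ω) (α : Fin d → ℕ) {c : ℝ} (hc : 0 ≤ c) :
    pSemi α K f ≤ c ↔ ∀ x ∈ K, ‖partialDeriv α f x‖ ≤ c := by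
  have hcont : ContinuousOn (fun x => ‖partialDeriv α f x‖) K :=
    ((contDiffOn_partialDeriv hΩ hf α).continuousOn.mono hKΩ).norm
  refine ⟨fun h x hx => ?_, fun h => Real.sSup_le (forall_mem_image.2 h) hc⟩
  exact (le_csSup (hK.bddAbove_image hcont) (mem_image_of_mem _ hx)).trans h

lemma smallE_pSemi_le_iff (hΩ : IsOpen Ω) (hK : IsCompact K) (hKΩ : K ⊆ Ω)
    {v : ℝ → Euc d → F} (hv : ∀ ε ∈ Ioo (0 : ℝ) 1, ContDiffOn ℝ (⊤ : ℕ∞) (v ε) Ω)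
    (α : Fin d → ℕ) (s : ℝ) :
    (SmallE fun ε => pSemi α K (v ε) ≤ ε ^ s) ↔
      ∀ᶠ ε in 𝓝[>] (0 : ℝ), ∀ x ∈ K, ‖partialDeriv α (v ε) x‖ ≤ ε ^ s := by
  rw [smallE_iff_eventually]
  refine eventually_congr ?_
  filter_upwards [Ioo_mem_nhdsGT one_pos] with ε hε
  exact pSemi_le_iff hΩ hK hKΩ (hv ε hε) α (Real.rpow_nonneg hε.1.le s)

end PartialDerivatives

section LinearGrowth

variable {F : Type} [NormedAddCommGroup F] [NormedSpace ℝ F] {K : Set (Euc d)}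
  {v w : ℝ → Euc d → F} {a b : ℝ}

/-- The order of `∂^α v_ε` in `ε⁻¹` grows at most linearly in `|α|`, uniformly on `K`: the bound
`p_{α,K}(v_ε) ≤ ε^{-a|α|-b}` of the spaces `𝒢^{L,a}(K)`, stated pointwise so that it makes sense
for nets of arbitrary functions and does not see the value `0` of `sSup` on unbounded sets. -/
def LinearGrowth (K : Set (Euc d)) (a b : ℝ) (v : ℝ → Euc d → F) : Prop :=
  ∀ α : Fin d → ℕ, ∀ᶠ ε in 𝓝[>] (0 : ℝ), ∀ x ∈ K,
    ‖partialDeriv α (v ε) x‖ ≤ ε ^ (-(a * ∑ i, (α i : ℝ)) - b)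

lemma LinearGrowth.of_norm_sub_le (hv : LinearGrowth K a b v)
    (hvw : ∀ (α : Fin d → ℕ) (m : ℕ), ∀ᶠ ε in 𝓝[>] (0 : ℝ), ∀ x ∈ K,
      ‖partialDeriv α (v ε) x - partialDeriv α (w ε) x‖ ≤ ε ^ (m : ℝ)) :
    LinearGrowth K a (b + 1) w := fun α => by
  obtain ⟨m, hm⟩ := exists_nat_ge (-(a * ∑ i, (α i : ℝ)) - b)
  filter_upwards [hv α, hvw α m, Ioc_mem_nhdsGT one_half_pos] with ε hvε hvwε hε x hx
  calc ‖partialDeriv α (w ε) x‖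
      ≤ ‖partialDeriv α (v ε) x‖ + ‖partialDeriv α (v ε) x - partialDeriv α (w ε) x‖ :=
        norm_le_norm_add_norm_sub _ _
    _ ≤ ε ^ (-(a * ∑ i, (α i : ℝ)) - b) + ε ^ (m : ℝ) := add_le_add (hvε x hx) (hvwε x hx)
    _ ≤ ε ^ (-(a * ∑ i, (α i : ℝ)) - (b + 1)) :=
        rpow_add_rpow_le_rpow hε.1 hε.2 (by linarith) (by linarith)

lemma exists_linearGrowth_iff_forall_net :
    (∃ a b : ℝ, LinearGrowth K a b v) ↔
      ∀ x : ℝ → Euc d, (∀ ε ∈ Ioo (0 : ℝ) 1, x ε ∈ K) → ∃ a b : ℝ, ∀ α : Fin d → ℕ,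
        ∀ᶠ ε in 𝓝[>] (0 : ℝ),
          ‖partialDeriv α (v ε) (x ε)‖ ≤ ε ^ (-(a * ∑ i, (α i : ℝ)) - b) := by
  constructor
  · rintro ⟨a, b, hv⟩ x hx
    refine ⟨a, b, fun α => ?_⟩
    filter_upwards [hv α, Ioo_mem_nhdsGT one_pos] with ε hvε hε
    exact hvε _ (hx ε hε)
  · intro h
    obtain ⟨n, hn⟩ : ∃ n : ℕ, LinearGrowth K n n v := by
      simp only [LinearGrowth, ← comap_natFloor_inv_atTop]
      refine exists_forall_eventually_forall_mem_of_net fun x hx => ?_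
      obtain ⟨a, b, hab⟩ := h x fun ε _ => hx ε
      obtain ⟨n, hn⟩ := exists_nat_ge (max a b)
      rw [comap_natFloor_inv_atTop]
      refine ⟨n, fun α => ?_⟩
      filter_upwards [hab α, Ioo_mem_nhdsGT one_pos] with ε habε hε
      refine habε.trans (Real.rpow_le_rpow_of_exponent_ge hε.1 hε.2.le ?_)
      gcongr
      exacts [(le_max_left a b).trans hn, (le_max_right a b).trans hn]
    exact ⟨n, n, hn⟩

end LinearGrowth

section Colombeau

variable {Ω K : Set (Euc d)}

lemma eventually_norm_partialDeriv_sub_le (hΩ : IsOpen Ω) (hK : IsCompact K) (hKΩ : K ⊆ Ω)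
    {v w : ModNet Ω} (h : Quot.mk (nulRel Ω) v = Quot.mk (nulRel Ω) w)
    (α : Fin d → ℕ) (m : ℕ) : ∀ᶠ ε in 𝓝[>] (0 : ℝ), ∀ x ∈ K,
      ‖partialDeriv α (v.1 ε) x - partialDeriv α (w.1 ε) x‖ ≤ ε ^ (m : ℝ) := by
  replace h := Quot.eqvGen_exact h
  induction h generalizing m with
  | rel v w hvw =>
    filter_upwards [(smallE_pSemi_le_iff hΩ hK hKΩ hvw.1 α m).1 (hvw.2 K hK hKΩ α m),
      Ioo_mem_nhdsGT one_pos] with ε hε hε₁ x hx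
    rw [← Pi.sub_apply, ← eqOn_partialDeriv_sub hΩ (v.2.1 ε hε₁) (w.2.1 ε hε₁) α (hKΩ hx)]
    exact hε x hx
  | refl v =>
    filter_upwards [self_mem_nhdsWithin] with ε hε x _
    rw [sub_self, norm_zero]
    exact Real.rpow_nonneg (le_of_lt hε) _
  | symm v w _ ih => simpa only [norm_sub_rev] using ih m
  | trans v w z _ _ ihvw ihwz =>
    filter_upwards [ihvw (m + 1), ihwz (m + 1), Ioc_mem_nhdsGT one_half_pos]
      with ε hvw hwz hε x hx
    calc ‖partialDeriv α (v.1 ε) x - partialDeriv α (z.1 ε) x‖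
        ≤ ‖partialDeriv α (v.1 ε) x - partialDeriv α (w.1 ε) x‖ +
            ‖partialDeriv α (w.1 ε) x - partialDeriv α (z.1 ε) x‖ :=
          norm_sub_le_norm_sub_add_norm_sub _ _ _
      _ ≤ ε ^ ((m + 1 : ℕ) : ℝ) + ε ^ ((m + 1 : ℕ) : ℝ) := add_le_add (hvw x hx) (hwz x hx)
      _ ≤ ε ^ (m : ℝ) := rpow_add_rpow_le_rpow hε.1 hε.2 (by simp) (by simp)

lemma mk_mem_GLaK_iff (hΩ : IsOpen Ω) (hK : IsCompact K) (hKΩ : K ⊆ Ω) (v : ModNet Ω) {a : ℝ} :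
    Quot.mk (nulRel Ω) v ∈ GLaK Ω a K ↔ ∃ a' < a, ∃ b : ℝ, LinearGrowth K a' b v.1 := by
  have hpSemi : ∀ (w : ModNet Ω) (a' b : ℝ), LinearGrowth K a' b w.1 ↔ ∀ α : Fin d → ℕ,
      SmallE fun ε => pSemi α K (w.1 ε) ≤ ε ^ (-(a' * ∑ i, (α i : ℝ)) - b) := fun w a' b =>
    forall_congr' fun α => (smallE_pSemi_le_iff hΩ hK hKΩ w.2.1 α _).symm
  constructor
  · rintro ⟨w, hw, a', ha', b, hb⟩
    exact ⟨a', ha', b + 1, ((hpSemi w a' b).2 hb).of_norm_sub_le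
      (eventually_norm_partialDeriv_sub_le hΩ hK hKΩ hw)⟩
  · rintro ⟨a', ha', b, hb⟩
    exact ⟨v, rfl, a', ha', b, (hpSemi v a' b).1 hb⟩

lemma sublinear_iff_exists_linearGrowth {u : Colombeau Ω} :
    Sublinear Ω u ↔ ∃ v : ModNet Ω, Quot.mk (nulRel Ω) v = u ∧
      ∀ K : Set (Euc d), IsCompact K → K ⊆ Ω → ∃ a b : ℝ, LinearGrowth K a b v.1 := by
  simp only [Sublinear, exists_seq_exponent_iff_exists_affine_exponent,
    exists_linearGrowth_iff_forall_net, Nat.cast_sum]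

end Colombeau

/-- u ∈ 𝒢(Ω) is sublinear iff for each compact K ⊂⊂ Ω there is
a > 0 with u ∈ 𝒢^{L,a}(K). -/
theorem sublinear_iff_forall_compact_GLa {d : ℕ} (Ω : Set (Euc d)) (hΩ : IsOpen Ω)
    (u : Colombeau Ω) :
    Sublinear Ω u ↔
      ∀ K : Set (Euc d), IsCompact K → K ⊆ Ω →
        ∃ a : ℝ, 0 < a ∧ u ∈ GLaK Ω a K := by
  rw [sublinear_iff_exists_linearGrowth]
  constructor
  · rintro ⟨v, rfl, hv⟩ K hK hKΩ
    obtain ⟨a, b, hab⟩ := hv K hK hKΩ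
    obtain ⟨a', ha'⟩ := exists_gt (max a 0)
    exact ⟨a', (le_max_right a 0).trans_lt ha',
      (mk_mem_GLaK_iff hΩ hK hKΩ v).2 ⟨a, (le_max_left a 0).trans_lt ha', b, hab⟩⟩
  · obtain ⟨v, rfl⟩ := Quot.exists_rep u
    refine fun h => ⟨v, rfl, fun K hK hKΩ => ?_⟩
    obtain ⟨_, -, hmem⟩ := h K hK hKΩ
    obtain ⟨a, -, b, hab⟩ := (mk_mem_GLaK_iff hΩ hK hKΩ v).1 hmem
    exact ⟨a, b, hab⟩

end
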